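/- arXiv:1101.4718 — 8 statements merged into one kernel-verified Lean document; each statement's English description precedes it below -/
import Mathlib

section
/- Let λ ∈ (0,1) and ξ > 0, and let (u_k)_{k≥0} be a sequence of nonnegative real numbers such that u_{k+1} ≤ (1 − λ/(k+1)) u_k + ξ/(k+1)² for every k ≥ 0. Then for every k ≥ 0, u_{k+1} ≤ (k+1)^{−λ} · (u_0 + 2^λ ξ (2 − λ)/(1 − λ)). -/
/-!
The weighted sequence `w k = (k + 1) ^ lam * u k` satisfies
`w (k + 1) ≤ w k + ξ * (k + 2) ^ lam / (k + 1) ^ 2`, because Bernoulli's inequality gives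
`(1 - lam / n) * (1 + 1 / n) ^ lam ≤ (1 - lam / n) * (1 + lam / n) ≤ 1` (`weight_mul_factor_le`).
As `(n + 1) ^ lam ≤ 2 ^ lam * n ^ lam`, the increments are at most `2 ^ lam * ξ * n ^ (lam - 2)`
with `n = k + 1`, and for `n ≥ 2` these are dominated by the telescoping terms
`((n - 1) ^ (lam - 1) - n ^ (lam - 1)) / (1 - lam)` (`rpow_sub_two_le_telescope`). Summation gives
`w (k + 1) ≤ u 0 + 2 ^ lam * ξ * (1 + 1 / (1 - lam))`, which is the claimed constant, and even with
the weight `(k + 2) ^ lam` in place of `(k + 1) ^ lam`.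
-/

theorem weight_mul_factor_le {lam n : ℝ} (h0 : 0 < lam) (h1 : lam < 1) (hn : 1 ≤ n) :
    (n + 1) ^ lam * (1 - lam / n) ≤ n ^ lam := by
  have hn0 : 0 < n := by linarith
  have hinv : 0 < 1 / n := by positivity
  have hb : (1 + 1 / n) ^ lam ≤ 1 + lam * (1 / n) :=
    rpow_one_add_le_one_add_mul_self (by linarith) h0.le h1.le
  have hsplit : (n + 1) ^ lam = n ^ lam * (1 + 1 / n) ^ lam := by
    rw [← Real.mul_rpow hn0.le (by positivity)]
    congr 1
    field_simp
  have hq : lam / n ≤ 1 := by rw [div_le_one hn0]; linarith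
  have hprod : (1 + 1 / n) ^ lam * (1 - lam / n) ≤ 1 := by
    have := mul_le_mul_of_nonneg_right hb (sub_nonneg.2 hq)
    have e : lam * (1 / n) = lam / n := by ring
    rw [e] at this
    nlinarith [sq_nonneg (lam / n)]
  rw [hsplit, mul_assoc]
  exact mul_le_of_le_one_right (by positivity) hprod

/-- The discrete form of comparing `n ^ (lam - 2)` with the integral of `x ^ (lam - 2)` over
`[m, m + 1]`, where `n = m + 1`. -/
theorem rpow_sub_two_le_telescope {lam m : ℝ} (h0 : 0 < lam) (h1 : lam < 1) (hm : 0 < m) :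
    (1 - lam) * (m + 1) ^ (lam - 2) ≤ m ^ (lam - 1) - (m + 1) ^ (lam - 1) := by
  have hn : 0 < m + 1 := by linarith
  have hr : 1 / (m + 1) ≤ 1 := by rw [div_le_one hn]; linarith
  have hb : (1 + -(1 / (m + 1))) ^ (1 - lam) ≤ 1 + (1 - lam) * -(1 / (m + 1)) :=
    rpow_one_add_le_one_add_mul_self (by linarith) (by linarith) (by linarith)
  have e1 : 1 + -(1 / (m + 1)) = m / (m + 1) := by field_simp; ring
  rw [e1, Real.div_rpow hm.le hn.le] at hb
  have e2 : m ^ (lam - 1) = (m ^ (1 - lam))⁻¹ := by rw [← Real.rpow_neg hm.le]; congr 1; ring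
  have e3 : (m + 1) ^ (lam - 1) = ((m + 1) ^ (1 - lam))⁻¹ := by
    rw [← Real.rpow_neg hn.le]; congr 1; ring
  have e4 : (m + 1) ^ (lam - 2) = ((m + 1) ^ (1 - lam))⁻¹ * (1 / (m + 1)) := by
    rw [← e3, show lam - 2 = (lam - 1) - 1 by ring, Real.rpow_sub_one hn.ne']; ring
  rw [e2, e3, e4]
  have hA : 0 < m ^ (1 - lam) := by positivity
  have hB : 0 < (m + 1) ^ (1 - lam) := by positivity
  generalize m ^ (1 - lam) = A at *
  generalize (m + 1) ^ (1 - lam) = B at *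
  have ht : 0 < (1 - lam) * (1 / (m + 1)) := mul_pos (by linarith) (by positivity)
  rw [mul_neg] at hb
  -- With `t = (1 - lam) / (m + 1)`, `A / B ≤ 1 - t` yields `(A / B) * (1 + t) ≤ 1`.
  have key : A / B * (1 + (1 - lam) * (1 / (m + 1))) ≤ 1 := by
    have := mul_le_mul_of_nonneg_right hb (by linarith : 0 ≤ 1 + (1 - lam) * (1 / (m + 1)))
    nlinarith [sq_nonneg ((1 - lam) * (1 / (m + 1)))]
  have := mul_le_mul_of_nonneg_left key (inv_pos.2 hA).le
  have e5 : A⁻¹ * (A / B * (1 + (1 - lam) * (1 / (m + 1)))) =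
      B⁻¹ + (1 - lam) * (B⁻¹ * (1 / (m + 1))) := by field_simp
  rw [e5] at this
  linarith

theorem weight_mul_noise_le {lam n : ℝ} (h0 : 0 < lam) (hn : 1 ≤ n) :
    (n + 1) ^ lam / n ^ 2 ≤ 2 ^ lam * n ^ (lam - 2) := by
  have hn0 : 0 < n := by linarith
  have h : (n + 1) ^ lam ≤ 2 ^ lam * n ^ lam := by
    rw [← Real.mul_rpow (by norm_num) hn0.le]
    exact Real.rpow_le_rpow (by linarith) (by linarith) h0.le
  rw [Real.rpow_sub hn0, Real.rpow_two, ← mul_div_assoc]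
  gcongr

/-- Case 0 < λ < 1 of the lemma on recursively bounded nonnegative sequences. -/
theorem stmt_0 (lam ξ : ℝ) (hlam0 : 0 < lam) (hlam1 : lam < 1) (hξ : 0 < ξ)
    (u : ℕ → ℝ) (hu : ∀ k, 0 ≤ u k)
    (hrec : ∀ k : ℕ, u (k + 1) ≤ (1 - lam / (k + 1)) * u k + ξ / (k + 1) ^ 2) :
    ∀ k : ℕ, u (k + 1) ≤ ((k : ℝ) + 1) ^ (-lam) * (u 0 + 2 ^ lam * ξ * (2 - lam) / (1 - lam)) := by
  have hs : 0 < 1 - lam := by linarith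
  have step : ∀ k : ℕ, ((k : ℝ) + 1 + 1) ^ lam * u (k + 1) ≤
      ((k : ℝ) + 1) ^ lam * u k + ξ * (2 ^ lam * ((k : ℝ) + 1) ^ (lam - 2)) := by
    intro k
    have hn : (1 : ℝ) ≤ (k : ℝ) + 1 := by linarith [Nat.cast_nonneg (α := ℝ) k]
    have a := mul_le_mul_of_nonneg_left (hrec k)
      (by positivity : 0 ≤ ((k : ℝ) + 1 + 1) ^ lam)
    have b := mul_le_mul_of_nonneg_right (weight_mul_factor_le hlam0 hlam1 hn) (hu k)
    have c := mul_le_mul_of_nonneg_left (weight_mul_noise_le hlam0 hn) hξ.le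
    calc _ ≤ _ := a
      _ = ((k : ℝ) + 1 + 1) ^ lam * (1 - lam / (k + 1)) * u k +
          ξ * (((k : ℝ) + 1 + 1) ^ lam / ((k : ℝ) + 1) ^ 2) := by ring
      _ ≤ _ := add_le_add b c
  have main : ∀ k : ℕ, ((k : ℝ) + 1 + 1) ^ lam * u (k + 1) ≤
      u 0 + 2 ^ lam * ξ * (1 + (1 - ((k : ℝ) + 1) ^ (lam - 1)) / (1 - lam)) := by
    intro k
    induction k with
    | zero =>
      have := step 0
      simp only [Nat.cast_zero, zero_add, Real.one_rpow, one_mul, mul_one, sub_self, zero_div,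
        add_zero] at this ⊢
      linarith
    | succ k ih =>
      have h := step (k + 1)
      have t := rpow_sub_two_le_telescope hlam0 hlam1 (by positivity : (0 : ℝ) < (k : ℝ) + 1)
      push_cast at h ⊢
      rw [mul_comm, ← le_div_iff₀ hs] at t
      have t' := mul_le_mul_of_nonneg_left t (by positivity : 0 ≤ 2 ^ lam * ξ)
      have e : (2 : ℝ) ^ lam * ξ * (1 + (1 - ((k : ℝ) + 1 + 1) ^ (lam - 1)) / (1 - lam)) =
          2 ^ lam * ξ * (1 + (1 - ((k : ℝ) + 1) ^ (lam - 1)) / (1 - lam)) +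
          2 ^ lam * ξ * ((((k : ℝ) + 1) ^ (lam - 1) - ((k : ℝ) + 1 + 1) ^ (lam - 1)) /
            (1 - lam)) := by ring
      rw [e]
      linarith
  intro k
  have hk : (0 : ℝ) < (k : ℝ) + 1 := by positivity
  have hw : ((k : ℝ) + 1) ^ lam * u (k + 1) ≤ ((k : ℝ) + 1 + 1) ^ lam * u (k + 1) :=
    mul_le_mul_of_nonneg_right
      (Real.rpow_le_rpow hk.le (by linarith) hlam0.le) (hu _)
  have hC : (2 : ℝ) ^ lam * ξ * (1 + (1 - ((k : ℝ) + 1) ^ (lam - 1)) / (1 - lam)) ≤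
      2 ^ lam * ξ * (2 - lam) / (1 - lam) := by
    rw [mul_div_assoc]
    refine mul_le_mul_of_nonneg_left ?_ (by positivity)
    have hp : 0 ≤ ((k : ℝ) + 1) ^ (lam - 1) := by positivity
    rw [le_div_iff₀ hs, add_mul, div_mul_cancel₀ _ hs.ne']
    linarith
  rw [Real.rpow_neg hk.le, inv_mul_eq_div, le_div_iff₀ (by positivity), mul_comm]
  linarith [main k]
end

section
/- Let ξ > 0 and let (u_k)_{k≥0} be a sequence of nonnegative real numbers such that u_{k+1} ≤ (1 − 1/(k+1)) u_k + ξ/(k+1)² for every k ≥ 0. Then for every k ≥ 0, u_{k+1} ≤ ξ (1 + log(k+1))/(k+1). -/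
/-!
Multiplying the recursion by `k + 1` gives `(k + 1) u_{k+1} ≤ k u_k + ξ / (k + 1)`, so
`k u_k` is bounded by `ξ` times a harmonic sum. The induction compares that sum with the
logarithm through `1 / (m + 1) ≤ log (m + 1) - log m`, an instance of `1 - x⁻¹ ≤ log x`.
-/

/-- Case λ = 1 of the lemma on recursively bounded nonnegative sequences. -/
theorem stmt_1 (ξ : ℝ) (hξ : 0 < ξ)
    (u : ℕ → ℝ) (hu : ∀ k, 0 ≤ u k)
    (hrec : ∀ k : ℕ, u (k + 1) ≤ (1 - 1 / (k + 1)) * u k + ξ / (k + 1) ^ 2) :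
    ∀ k : ℕ, u (k + 1) ≤ ξ * (1 + Real.log ((k : ℝ) + 1)) / ((k : ℝ) + 1) := by
  intro k
  induction k with
  | zero => simpa using hrec 0
  | succ k ih =>
    have h := hrec (k + 1)
    push_cast at h ⊢
    have hm : (0 : ℝ) < (k : ℝ) + 1 := by positivity
    generalize (k : ℝ) + 1 = m at *
    have hm1 : 0 < m + 1 := by linarith
    have hlog : 1 / (m + 1) ≤ Real.log (m + 1) - Real.log m := by
      rw [← Real.log_div hm1.ne' hm.ne']
      refine le_trans (le_of_eq ?_) (Real.one_sub_inv_le_log_of_pos (div_pos hm1 hm))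
      field_simp
      ring
    rw [le_div_iff₀ hm] at ih
    rw [le_div_iff₀ hm1]
    calc u (k + 1 + 1) * (m + 1)
        ≤ ((1 - 1 / (m + 1)) * u (k + 1) + ξ / (m + 1) ^ 2) * (m + 1) := by gcongr
      _ = u (k + 1) * m + ξ * (1 / (m + 1)) := by
          field_simp
          ring
      _ ≤ ξ * (1 + Real.log m) + ξ * (Real.log (m + 1) - Real.log m) := by gcongr
      _ = ξ * (1 + Real.log (m + 1)) := by ring
end

section
/- Let λ > 1 and ξ > 0, and let (u_k)_{k≥0} be a sequence of nonnegative real numbers such that u_{k+1} ≤ (1 − λ/(k+1)) u_k + ξ/(k+1)² for every k ≥ 0. Then for every k ≥ 1, u_k ≤ ξ · max(1, 1/(λ−1)) / k; in particular u_k = O(1/k). -/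
/-!
Put `M = ξ * max 1 (1/(λ-1))`, so that `ξ ≤ M` and `ξ ≤ M (λ-1)`. The proof is by induction on `k`,
split on the sign of the coefficient `1 - λ/(k+1)`. If it is nonpositive (which includes `k = 0`),
then `u (k+1) ≤ ξ/(k+1)² ≤ M/(k+1)`. Otherwise the induction hypothesis `u k ≤ M/k` may be inserted,
and after clearing denominators the claim becomes `ξ k ≤ M (λ-1) (k+1)`.
-/

/-- Case λ > 1 of the lemma on recursively bounded nonnegative sequences:
`u k = O(1/k)` with the explicit constant `ξ * max 1 (1/(λ-1))`. -/
theorem stmt_2 (lam ξ : ℝ) (hlam : 1 < lam) (hξ : 0 < ξ)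
    (u : ℕ → ℝ) (hu : ∀ k, 0 ≤ u k)
    (hrec : ∀ k : ℕ, u (k + 1) ≤ (1 - lam / (k + 1)) * u k + ξ / (k + 1) ^ 2) :
    ∀ k : ℕ, 1 ≤ k → u k ≤ ξ * max 1 (1 / (lam - 1)) / k := by
  have hl : 0 < lam - 1 := by linarith
  have h1 : ξ ≤ ξ * max 1 (1 / (lam - 1)) :=
    le_mul_of_one_le_right hξ.le (le_max_left _ _)
  have h2 : ξ ≤ ξ * max 1 (1 / (lam - 1)) * (lam - 1) := by
    rw [mul_assoc]
    refine le_mul_of_one_le_right hξ.le ?_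
    rw [← div_le_iff₀ hl]
    exact le_max_right _ _
  generalize ξ * max 1 (1 / (lam - 1)) = M at h1 h2
  intro k
  induction k with
  | zero => intro hk; omega
  | succ k ih =>
    intro _
    have hk0 : (0 : ℝ) ≤ k := Nat.cast_nonneg k
    have hk1 : (0 : ℝ) < k + 1 := by positivity
    push_cast
    refine (hrec k).trans ?_
    rcases lt_or_ge (k + 1 : ℝ) lam with h | h
    · have hc : 1 - lam / (k + 1 : ℝ) ≤ 0 := by
        rw [sub_nonpos, one_le_div hk1]
        exact h.le
      have hneg := mul_nonpos_of_nonpos_of_nonneg hc (hu k)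
      have hξM : ξ / (k + 1 : ℝ) ^ 2 ≤ M / (k + 1) := by
        rw [div_le_div_iff₀ (by positivity) hk1]
        nlinarith [mul_le_mul_of_nonneg_right h1 hk1.le,
          mul_nonneg (mul_nonneg (hξ.le.trans h1) hk1.le) hk0]
      linarith
    · have hkpos : (0 : ℝ) < k := by linarith
      have hc : 0 ≤ 1 - lam / (k + 1 : ℝ) := by
        rw [sub_nonneg, div_le_one hk1]
        exact h
      have hstep := mul_le_mul_of_nonneg_left (ih (by exact_mod_cast hkpos)) hc
      -- The slack in the inductive step, written over a common denominator.
      have key : M / (k + 1 : ℝ) - ((1 - lam / (k + 1)) * (M / k) + ξ / (k + 1) ^ 2)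
          = (M * (lam - 1) * (k + 1) - ξ * k) / (k * (k + 1) ^ 2) := by
        field_simp
        ring
      have hnum : 0 ≤ M * (lam - 1) * (k + 1 : ℝ) - ξ * k := by
        nlinarith [mul_le_mul_of_nonneg_right h2 hk1.le]
      have hslack : 0 ≤ (M * (lam - 1) * (k + 1 : ℝ) - ξ * k) / (k * (k + 1) ^ 2) := by
        positivity
      linarith
end

section
/- Let α > 0 and let a, b, r, r*, R0 be positive real numbers with b ≤ r* ≤ a, R0/2 ≤ r, α a < π, α r < π/2 and α r* < π/2. Then (cos(α b) − cos(α r) cos(α a)) / (sin(α r) sin(α a)) ≥ cos(α r*) · tan(α R0 / 4). -/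
/-! Since `α R0 / 4 ≤ α r / 2 < π / 2` and `tan` is increasing there, it suffices to bound the ratio
below by `cos (α rs) * tan (α r / 2)`. Using `tan (x / 2) * sin x = 1 - cos x`, this becomes
`cos (α rs) * (1 - cos (α r)) * sin (α a) ≤ cos (α b) - cos (α r) * cos (α a)`. It holds because
`cos (α a) ≤ cos (α rs) ≤ cos (α b)`, `cos (α r) ≥ 0`, and `sin (α a) ≤ 1`. -/

/-- Lower bound on the cosine of the angle at the current iterate in the spherical
comparison triangle. -/
theorem stmt_8 (α a b r rs R0 : ℝ) (hα : 0 < α) (ha : 0 < a) (hb : 0 < b) (hr : 0 < r)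
    (hrs : 0 < rs) (hR0 : 0 < R0) (hbrs : b ≤ rs) (hrsa : rs ≤ a) (hR0r : R0 / 2 ≤ r)
    (haπ : α * a < Real.pi) (hrπ : α * r < Real.pi / 2) (hrsπ : α * rs < Real.pi / 2) :
    (Real.cos (α * b) - Real.cos (α * r) * Real.cos (α * a)) /
        (Real.sin (α * r) * Real.sin (α * a)) ≥
      Real.cos (α * rs) * Real.tan (α * R0 / 4) := by
  have hA : 0 < α * a := mul_pos hα ha
  have hB : 0 < α * b := mul_pos hα hb
  have hR : 0 < α * r := mul_pos hα hr
  have hS : 0 < α * rs := mul_pos hα hrs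
  have hQ : 0 < α * R0 := mul_pos hα hR0
  have hBS : α * b ≤ α * rs := by gcongr
  have hSA : α * rs ≤ α * a := by gcongr
  have hQR : α * (R0 / 2) ≤ α * r := by gcongr
  have hcBS : Real.cos (α * rs) ≤ Real.cos (α * b) :=
    Real.cos_le_cos_of_nonneg_of_le_pi hB.le (by linarith) hBS
  have hcSA : Real.cos (α * a) ≤ Real.cos (α * rs) :=
    Real.cos_le_cos_of_nonneg_of_le_pi hS.le haπ.le hSA
  have hcS : 0 < Real.cos (α * rs) := Real.cos_pos_of_mem_Ioo ⟨by linarith, hrsπ⟩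
  have hcR : 0 < Real.cos (α * r) := Real.cos_pos_of_mem_Ioo ⟨by linarith, hrπ⟩
  have hsR : 0 < Real.sin (α * r) := Real.sin_pos_of_pos_of_lt_pi hR (by linarith)
  have hsA : 0 < Real.sin (α * a) := Real.sin_pos_of_pos_of_lt_pi hA haπ
  have htan : Real.tan (α * R0 / 4) ≤ Real.tan (α * r / 2) :=
    Real.strictMonoOn_tan.monotoneOn ⟨by linarith, by linarith⟩ ⟨by linarith, by linarith⟩
      (by linarith)
  have hhalf : Real.tan (α * r / 2) * Real.sin (α * r) = 1 - Real.cos (α * r) := by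
    have hc : Real.cos (α * r / 2) ≠ 0 :=
      (Real.cos_pos_of_mem_Ioo ⟨by linarith, by linarith⟩).ne'
    have hd : α * r = 2 * (α * r / 2) := by ring
    have h1 : Real.sin (α * r) = 2 * Real.sin (α * r / 2) * Real.cos (α * r / 2) := by
      rw [← Real.sin_two_mul, ← hd]
    have h2 : Real.cos (α * r) = 1 - 2 * Real.sin (α * r / 2) ^ 2 := by
      have h3 := Real.cos_two_mul (α * r / 2)
      rw [← hd] at h3
      linarith [Real.sin_sq_add_cos_sq (α * r / 2)]
    rw [h1, h2, Real.tan_eq_sin_div_cos]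
    field_simp
    ring
  refine ge_iff_le.mpr ((mul_le_mul_of_nonneg_left htan hcS.le).trans ?_)
  rw [le_div_iff₀ (mul_pos hsR hsA)]
  calc Real.cos (α * rs) * Real.tan (α * r / 2) * (Real.sin (α * r) * Real.sin (α * a))
      = Real.cos (α * rs) * (1 - Real.cos (α * r)) * Real.sin (α * a) := by
        rw [← hhalf]; ring
    _ ≤ Real.cos (α * rs) * (1 - Real.cos (α * r)) :=
        mul_le_of_le_one_right
          (mul_nonneg hcS.le (sub_nonneg.mpr (Real.cos_le_one _))) (Real.sin_le_one _)
    _ ≤ Real.cos (α * b) - Real.cos (α * r) * Real.cos (α * a) := by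
        nlinarith [mul_le_mul_of_nonneg_left hcSA hcR.le]
end

section
/- Let β > 0, K > 0, r > 0 and t ≥ 0 be real numbers with tanh(β t / 2) ≤ K · tanh(β r). Then cosh(β r) cosh(β t) − K sinh(β r) sinh(β t) ≤ cosh(β r). -/
/-- Hyperbolic non-expansion estimate: under the step-size condition, the distance of
the iterate to the minimax center does not increase. -/
theorem stmt_9 (β K r t : ℝ) (hβ : 0 < β) (hK : 0 < K) (hr : 0 < r) (ht : 0 ≤ t)
    (h : Real.tanh (β * t / 2) ≤ K * Real.tanh (β * r)) :
    Real.cosh (β * r) * Real.cosh (β * t) - K * Real.sinh (β * r) * Real.sinh (β * t) ≤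
      Real.cosh (β * r) := by
  have hs : 0 ≤ Real.sinh (β * t / 2) := Real.sinh_nonneg_iff.2 (by positivity)
  have hc := Real.cosh_pos (β * t / 2)
  have hC := Real.cosh_pos (β * r)
  rw [Real.tanh_eq_sinh_div_cosh, Real.tanh_eq_sinh_div_cosh, ← mul_div_assoc,
    div_le_div_iff₀ hc hC] at h
  -- With u = β t / 2, the half-angle formulas turn the claim into
  -- 2 sinh u * (sinh u * cosh (β r) - K sinh (β r) cosh u) ≤ 0.
  have e : β * t = 2 * (β * t / 2) := by ring
  rw [e, Real.cosh_two_mul, Real.sinh_two_mul, Real.cosh_sq]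
  linarith [mul_le_mul_of_nonneg_left h hs]
end

section
/- Let β > 0, K > 0, R0 > 0 and t > 0 be real numbers with tanh(β t / 2) ≤ K · tanh(β R0 / 2). Then cosh(β t) − K tanh(β R0) sinh(β t) ≤ 1 − K β t · (tanh(β R0) − tanh(β R0 / 2)). -/
/-!
With `u = β t`, the half-angle identity `cosh u - 1 = tanh (u / 2) * sinh u` and the hypothesis
give `cosh u - 1 ≤ K tanh (β R0 / 2) sinh u`, so the left-hand side is at most
`1 - K (tanh (β R0) - tanh (β R0 / 2)) sinh u`. The difference of the two tangents is nonnegative,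
so `u ≤ sinh u` finishes the proof.
-/

theorem cosh_sub_one_eq_tanh_half_mul_sinh (u : ℝ) :
    Real.cosh u - 1 = Real.tanh (u / 2) * Real.sinh u := by
  obtain ⟨v, rfl⟩ : ∃ v, u = 2 * v := ⟨u / 2, by ring⟩
  have hc := (Real.cosh_pos v).ne'
  rw [mul_div_cancel_left₀ v two_ne_zero, Real.tanh_eq_sinh_div_cosh, Real.cosh_two_mul,
    Real.sinh_two_mul]
  field_simp
  linear_combination Real.cosh_sq v

theorem tanh_half_le_tanh {u : ℝ} (hu : 0 ≤ u) : Real.tanh (u / 2) ≤ Real.tanh u := by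
  obtain ⟨v, rfl⟩ : ∃ v, u = 2 * v := ⟨u / 2, by ring⟩
  have hc := Real.cosh_pos v
  have hs : 0 ≤ Real.sinh v := Real.sinh_nonneg_iff.2 (by linarith)
  rw [mul_div_cancel_left₀ v two_ne_zero, Real.tanh_eq_sinh_div_cosh, Real.tanh_eq_sinh_div_cosh,
    Real.cosh_two_mul, Real.sinh_two_mul, div_le_div_iff₀ hc (by positivity)]
  -- The difference of the two sides is `sinh v * (cosh v ^ 2 - sinh v ^ 2) = sinh v`.
  linear_combination hs - Real.sinh v * Real.cosh_sq v

/-- Explicit hyperbolic contraction estimate used outside the ball `B(c, R0)`. -/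
theorem stmt_10 (β K R0 t : ℝ) (hβ : 0 < β) (hK : 0 < K) (hR0 : 0 < R0) (ht : 0 < t)
    (h : Real.tanh (β * t / 2) ≤ K * Real.tanh (β * R0 / 2)) :
    Real.cosh (β * t) - K * Real.tanh (β * R0) * Real.sinh (β * t) ≤
      1 - K * β * t * (Real.tanh (β * R0) - Real.tanh (β * R0 / 2)) := by
  have hu : 0 ≤ β * t := by positivity
  have hT : 0 ≤ K * (Real.tanh (β * R0) - Real.tanh (β * R0 / 2)) :=
    mul_nonneg hK.le (sub_nonneg.2 (tanh_half_le_tanh (by positivity)))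
  have h1 := mul_le_mul_of_nonneg_right h (Real.sinh_nonneg_iff.2 hu)
  have h2 := mul_le_mul_of_nonneg_left (Real.self_le_sinh_iff.2 hu) hT
  linear_combination h1 + h2 + cosh_sub_one_eq_tanh_half_mul_sinh (β * t)
end

section
/- Let β > 0, K > 0, R0 > 0, t > 0 and r ≥ R0 be real numbers with tanh(β t / 2) ≤ K · tanh(β R0 / 2). Then cosh(β r) cosh(β t) − K sinh(β r) sinh(β t) ≤ (1 − η t) · cosh(β r), where η = K β (tanh(β R0) − tanh(β R0/2)) > 0. -/
/-!
The half-angle identity `cosh x - 1 = sinh x * tanh (x / 2)` turns the left-hand side into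
`cosh (β r) * (1 - sinh (β t) * (K tanh (β r) - tanh (β t / 2)))`. Monotonicity of `tanh`
together with the step-size hypothesis bounds the inner factor below by
`K (tanh (β R0) - tanh (β R0 / 2)) > 0`, and `sinh (β t) ≥ β t` gives the linear rate.
-/

theorem tanh_strictMono_aux : StrictMono Real.tanh := by
  intro a b hab
  rw [Real.tanh_eq_sinh_div_cosh, Real.tanh_eq_sinh_div_cosh,
    div_lt_div_iff₀ (Real.cosh_pos a) (Real.cosh_pos b)]
  have h1 : 0 < Real.sinh (b - a) := Real.sinh_pos_iff.mpr (sub_pos.mpr hab)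
  rw [Real.sinh_sub] at h1
  linarith

theorem cosh_eq_one_add_sinh_mul_tanh_half (x : ℝ) :
    Real.cosh x = 1 + Real.sinh x * Real.tanh (x / 2) := by
  obtain ⟨y, rfl⟩ : ∃ y, x = 2 * y := ⟨x / 2, by ring⟩
  rw [mul_div_cancel_left₀ y two_ne_zero, Real.cosh_two_mul, Real.sinh_two_mul,
    Real.tanh_eq_sinh_div_cosh]
  have hc := (Real.cosh_pos y).ne'
  field_simp
  linarith [Real.cosh_sq y]

/-- Geometric decay of `cosh (β ρ(c, x_k))` outside the ball `B(c, R0)`, with the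
explicit rate `η = K β (tanh(β R0) − tanh(β R0/2)) > 0`. -/
theorem stmt_11 (β K R0 t r : ℝ) (hβ : 0 < β) (hK : 0 < K) (hR0 : 0 < R0) (ht : 0 < t)
    (hr : R0 ≤ r) (h : Real.tanh (β * t / 2) ≤ K * Real.tanh (β * R0 / 2)) :
    0 < K * β * (Real.tanh (β * R0) - Real.tanh (β * R0 / 2)) ∧
      Real.cosh (β * r) * Real.cosh (β * t) - K * Real.sinh (β * r) * Real.sinh (β * t) ≤
        (1 - K * β * (Real.tanh (β * R0) - Real.tanh (β * R0 / 2)) * t) *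
          Real.cosh (β * r) := by
  have hgap : 0 < Real.tanh (β * R0) - Real.tanh (β * R0 / 2) :=
    sub_pos.mpr (tanh_strictMono_aux (half_lt_self (mul_pos hβ hR0)))
  refine ⟨by positivity, ?_⟩
  have hmono : Real.tanh (β * R0) ≤ Real.tanh (β * r) :=
    tanh_strictMono_aux.monotone (by gcongr)
  have hS : β * t ≤ Real.sinh (β * t) := Real.self_le_sinh_iff.mpr (by positivity)
  have hinner : K * (Real.tanh (β * R0) - Real.tanh (β * R0 / 2)) ≤
      K * Real.tanh (β * r) - Real.tanh (β * t / 2) := by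
    linarith [mul_le_mul_of_nonneg_left hmono hK.le]
  have hprod := mul_le_mul hS hinner (by positivity) (le_trans (by positivity) hS)
  have hsinh : Real.sinh (β * r) = Real.tanh (β * r) * Real.cosh (β * r) := by
    rw [Real.tanh_eq_sinh_div_cosh, div_mul_cancel₀ _ (Real.cosh_pos _).ne']
  rw [cosh_eq_one_add_sinh_mul_tanh_half (β * t), hsinh]
  linarith [mul_le_mul_of_nonneg_right hprod (Real.cosh_pos (β * r)).le]
end

section
/- Let E be a finite-dimensional real inner product space, let P ⊆ E be a nonempty finite set, let H(x) = max_{p ∈ P} ‖x − p‖, let c ∈ E be a minimizer of H over E, and let r* = H(c). Then for every x ∈ E, H(x)² ≥ r*² + ‖x − c‖². -/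
/-!
The function `H²` is a maximum of the functions `‖· - p‖²`, each of which satisfies the
strong-convexity identity along segments, so
`H(c + t(x - c))² ≤ (1 - t) H(c)² + t H(x)² - t(1 - t)‖x - c‖²` for `t ∈ [0, 1]`.
Since `c` minimizes `H`, the left side is at least `H(c)²`; dividing by `t` gives
`H(c)² + (1 - t)‖x - c‖² ≤ H(x)²`, and `t → 0` gives the claim.
-/

/-- Stewart's identity: the squared norm is quadratic with leading coefficient `‖v - u‖²`
along the segment from `u` to `v`. -/
lemma norm_sq_segment {E : Type*} [NormedAddCommGroup E] [InnerProductSpace ℝ E]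
    (u v : E) (t : ℝ) :
    ‖u + t • (v - u)‖ ^ 2 = (1 - t) * ‖u‖ ^ 2 + t * ‖v‖ ^ 2 - t * (1 - t) * ‖v - u‖ ^ 2 := by
  rw [norm_add_sq_real, norm_sub_sq_real, norm_smul, mul_pow, norm_sub_sq_real,
    inner_smul_right, inner_sub_right, real_inner_self_eq_norm_sq, real_inner_comm v u,
    Real.norm_eq_abs, sq_abs]
  ring

/-- Euclidean instance of the key lemma in its sharp quadratic form:
`H(x)² ≥ r*² + ‖x − c‖²` for the farthest-distance function `H` of a finite set `P`,
its minimax center `c` and minimax radius `r* = H(c)`. -/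
theorem stmt_12 {E : Type*} [NormedAddCommGroup E] [InnerProductSpace ℝ E]
    [FiniteDimensional ℝ E]
    (P : Finset E) (hP : P.Nonempty)
    (H : E → ℝ) (hH : ∀ x, H x = P.sup' hP fun p => ‖x - p‖)
    (c : E) (hc : ∀ y, H c ≤ H y) :
    ∀ x : E, H x ^ 2 ≥ H c ^ 2 + ‖x - c‖ ^ 2 := by
  intro x
  have hle : ∀ y, ∀ p ∈ P, ‖y - p‖ ≤ H y := fun y p hp => by
    rw [hH]
    exact Finset.le_sup' (fun p => ‖y - p‖) hp
  have hc0 : 0 ≤ H c := by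
    obtain ⟨p, hp⟩ := hP
    exact (norm_nonneg _).trans (hle c p hp)
  have key : ∀ t : ℝ, 0 < t → t < 1 → H c ^ 2 + (1 - t) * ‖x - c‖ ^ 2 ≤ H x ^ 2 := by
    intro t ht0 ht1
    obtain ⟨p, hp, hpe⟩ := Finset.exists_mem_eq_sup' hP fun p => ‖c + t • (x - c) - p‖
    rw [← hH] at hpe
    have h1 : H c ^ 2 ≤ ‖c + t • (x - c) - p‖ ^ 2 := by
      rw [← hpe]
      exact pow_le_pow_left₀ hc0 (hc _) 2
    have h2 := norm_sq_segment (c - p) (x - p) t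
    rw [sub_sub_sub_cancel_right, sub_add_eq_add_sub] at h2
    have h3 := pow_le_pow_left₀ (norm_nonneg _) (hle c p hp) 2
    have h4 := pow_le_pow_left₀ (norm_nonneg _) (hle x p hp) 2
    have h5 := mul_le_mul_of_nonneg_left h3 (sub_nonneg.2 ht1.le)
    have h6 := mul_le_mul_of_nonneg_left h4 ht0.le
    refine le_of_mul_le_mul_left ?_ ht0
    linarith
  have hlim : Filter.Tendsto (fun t : ℝ => H c ^ 2 + (1 - t) * ‖x - c‖ ^ 2)
      (nhdsWithin 0 (Set.Ioi 0)) (nhds (H c ^ 2 + (1 - 0) * ‖x - c‖ ^ 2)) :=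
    (Continuous.tendsto (by fun_prop) 0).mono_left nhdsWithin_le_nhds
  rw [sub_zero, one_mul] at hlim
  refine le_of_tendsto hlim ?_
  filter_upwards [Ioo_mem_nhdsGT (zero_lt_one' ℝ)] with t ht
  exact key t ht.1 ht.2
end
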